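/- (Deterministic core of Theorem 6.1: the joint loss avoids both class collapse and feature suppression.) In the structured contrastive dataset with μ = 0 and 5 ≤ p ≤ K, assume φ_3 ≥ φ_4 ≥ … ≥ φ_K, φ_2² > φ_{p−2}²/(K−2), and φ_1² < φ_{p−1}²/(K−2). For β ∈ (0,1) define the joint loss L_joint,β(W) = β L_SCL(W) + (1−β) L_UCL(W) for W ∈ ℝ^{p×D}. Then every minimum-norm global minimizer W* of L_joint,β (minimizing the Frobenius norm among global minimizers) satisfies W* v_1 ≠ 0 and W* v_2 ≠ 0; both the class feature and the subclass feature are learned. -/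

import Mathlib

open Matrix

/-- The contrastive trace loss `Tr(-2 WᵀW P + WᵀW M WᵀW M)`. -/
noncomputable def CLTraceLoss {p D : ℕ} (P M : Matrix (Fin D) (Fin D) ℝ)
    (W : Matrix (Fin p) (Fin D) ℝ) : ℝ :=
  Matrix.trace ((-2 : ℝ) • (Wᵀ * W * P) + Wᵀ * W * M * (Wᵀ * W) * M)

/-!
Write the data as the rows of `X`. In the regime considered both losses, hence also the joint loss,
have the form `Tr(-2 WᵀW XᵀTX / N + (WᵀW XᵀX / N)²)`, where the symmetric matrix `T` records how the
positive pairs are weighted. The label vectors of the features are joint eigenvectors of the Gram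
matrix `X Xᵀ` and of the class and subclass parts of `T`: the class labels with `T`-eigenvalue `1`,
the subclass labels with `1 - β`; on the complement of the constants and the class labels, `T` is at
most `1 - β`.

Suppose a minimum-norm minimizer `W` kills a feature. Minimality of the norm makes `W` vanish on the
kernel of `X`, so `W` misses the whole corresponding eigendirection of `XᵀX`. As `p` is larger than
the number of excluded features, some unit vector `a` gives a row direction `aᵀ W` whose data
response is orthogonal to the excluded label vectors. Exchange it for the missed eigendirection,
optimally scaled. The loss changes by at most the difference of two one-dimensional optimal values,
which is a strict gain for the class feature. For the subclass feature the loss does not increase,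
and the Frobenius norm strictly drops, because the excluded features include every feature (other
than the subclass) whose loading is at least as large as that of the subclass.
-/

section LinearAlgebra

variable {ι α : Type*} [Fintype ι] [Fintype α]

lemma dotProduct_self_nonneg (v : ι → ℝ) : 0 ≤ v ⬝ᵥ v := by
  simpa using dotProduct_self_star_nonneg v

lemma dotProduct_self_pos {v : ι → ℝ} (hv : v ≠ 0) : 0 < v ⬝ᵥ v := by
  simpa using dotProduct_self_star_pos_iff.mpr hv

lemma sq_dotProduct_le (v w : ι → ℝ) : (v ⬝ᵥ w) ^ 2 ≤ (v ⬝ᵥ v) * (w ⬝ᵥ w) := by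
  simpa only [dotProduct, ← sq] using Finset.sum_mul_sq_le_sq_mul_sq Finset.univ v w

lemma vecMul_dotProduct_vecMul (f g : ι → ℝ) (A : Matrix ι α ℝ) :
    (f ᵥ* A) ⬝ᵥ (g ᵥ* A) = f ⬝ᵥ ((A * Aᵀ) *ᵥ g) := by
  rw [← dotProduct_mulVec, ← mulVec_transpose A g, mulVec_mulVec]

/-- By Cauchy-Schwarz applied to `‖A w‖² = ⟨Aᵀ A w, w⟩`, it suffices to bound `Aᵀ` at the single
vector `A w`. -/
lemma mulVec_dotProduct_self_le (A : Matrix ι α ℝ) (w : α → ℝ) {L : ℝ} (hL : 0 ≤ L)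
    (h : ((A *ᵥ w) ᵥ* A) ⬝ᵥ ((A *ᵥ w) ᵥ* A) ≤ L * ((A *ᵥ w) ⬝ᵥ (A *ᵥ w))) :
    (A *ᵥ w) ⬝ᵥ (A *ᵥ w) ≤ L * (w ⬝ᵥ w) := by
  have hw := dotProduct_self_nonneg w
  by_contra! hlt
  have hpos : 0 < (A *ᵥ w) ⬝ᵥ (A *ᵥ w) := (mul_nonneg hL hw).trans_lt hlt
  refine hlt.not_ge (le_of_mul_le_mul_right ?_ hpos)
  calc ((A *ᵥ w) ⬝ᵥ (A *ᵥ w)) * ((A *ᵥ w) ⬝ᵥ (A *ᵥ w))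
      = (((A *ᵥ w) ᵥ* A) ⬝ᵥ w) ^ 2 := by rw [← dotProduct_mulVec, sq]
    _ ≤ (((A *ᵥ w) ᵥ* A) ⬝ᵥ ((A *ᵥ w) ᵥ* A)) * (w ⬝ᵥ w) := sq_dotProduct_le _ _
    _ ≤ L * ((A *ᵥ w) ⬝ᵥ (A *ᵥ w)) * (w ⬝ᵥ w) := by gcongr
    _ = L * (w ⬝ᵥ w) * ((A *ᵥ w) ⬝ᵥ (A *ᵥ w)) := by ring

lemma exists_unit_mulVec_eq_zero (h : Fintype.card ι < Fintype.card α) (A : Matrix ι α ℝ) :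
    ∃ a : α → ℝ, a ⬝ᵥ a = 1 ∧ A *ᵥ a = 0 := by
  have hker : LinearMap.ker A.mulVecLin ≠ ⊥ :=
    LinearMap.ker_ne_bot_of_finrank_lt (by simpa using h)
  obtain ⟨b, hb, hb0⟩ := (Submodule.ne_bot_iff _).mp hker
  have hbb : 0 < b ⬝ᵥ b := dotProduct_self_pos hb0
  refine ⟨(√(b ⬝ᵥ b))⁻¹ • b, ?_, ?_⟩
  · rw [smul_dotProduct, dotProduct_smul, smul_eq_mul, smul_eq_mul, ← mul_assoc, ← mul_inv,
      Real.mul_self_sqrt hbb.le, inv_mul_cancel₀ hbb.ne']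
  · rw [mulVec_smul, show A *ᵥ b = 0 from LinearMap.mem_ker.mp hb, smul_zero]

lemma trace_transpose_mul_self (A : Matrix ι α ℝ) : trace (Aᵀ * A) = ∑ i, ∑ j, A i j ^ 2 := by
  rw [Finset.sum_comm]
  simp [trace, mul_apply, sq]

lemma trace_vecMulVec_mul (u : ι → ℝ) (B : Matrix ι ι ℝ) :
    trace (vecMulVec u u * B) = u ⬝ᵥ (B *ᵥ u) := by
  rw [vecMulVec_mul, trace_vecMulVec, dotProduct_mulVec, dotProduct_comm]

lemma smul_transpose_mul_mul_mulVec (c : ℝ) (X : Matrix ι α ℝ) (T : Matrix ι ι ℝ) (u : α → ℝ) :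
    (c • (Xᵀ * T * X)) *ᵥ u = c • ((T *ᵥ (X *ᵥ u)) ᵥ* X) := by
  rw [smul_mulVec, ← mulVec_mulVec, ← mulVec_mulVec, mulVec_transpose]

lemma sum_vecMulVec_row {α : Type*} (A : Matrix ι α ℝ) : ∑ i, vecMulVec (A i) (A i) = Aᵀ * A := by
  ext a b
  simp [Matrix.sum_apply, vecMulVec_apply, mul_apply]

end LinearAlgebra

section Loss

variable {p D : ℕ} {P M : Matrix (Fin D) (Fin D) ℝ} {W : Matrix (Fin p) (Fin D) ℝ}

lemma CLTraceLoss_add_smul (P Q M : Matrix (Fin D) (Fin D) ℝ) {s t : ℝ} (hst : s + t = 1)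
    (W : Matrix (Fin p) (Fin D) ℝ) :
    CLTraceLoss (s • P + t • Q) M W = s * CLTraceLoss P M W + t * CLTraceLoss Q M W := by
  simp only [CLTraceLoss, trace_add, trace_smul, Matrix.mul_add, Matrix.mul_smul, smul_add,
    smul_eq_mul]
  linear_combination (-trace (Wᵀ * W * M * (Wᵀ * W) * M)) * hst

lemma CLTraceLoss_eq_trace (P M : Matrix (Fin D) (Fin D) ℝ) (W : Matrix (Fin p) (Fin D) ℝ) :
    CLTraceLoss P M W
      = -2 * trace (W * P * Wᵀ) + trace (W * M * Wᵀ * (W * M * Wᵀ)) := by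
  have hP : trace (Wᵀ * W * P) = trace (W * P * Wᵀ) := by
    rw [Matrix.mul_assoc, trace_mul_comm]
  have hM : trace (Wᵀ * W * M * (Wᵀ * W) * M) = trace (W * M * Wᵀ * (W * M * Wᵀ)) := by
    simpa only [Matrix.mul_assoc] using trace_mul_comm Wᵀ (W * M * Wᵀ * W * M)
  rw [CLTraceLoss, trace_add, trace_smul, smul_eq_mul, hP, hM]

lemma transpose_mul_self_add_vecMulVec {a : Fin p → ℝ} (ha : a ⬝ᵥ a = 1) (haW : a ᵥ* W = 0)
    (u : Fin D → ℝ) :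
    (W + vecMulVec a u)ᵀ * (W + vecMulVec a u) = Wᵀ * W + vecMulVec u u := by
  rw [transpose_add, Matrix.add_mul, Matrix.mul_add, Matrix.mul_add, transpose_vecMulVec,
    mul_vecMulVec, mulVec_transpose, haW, vecMulVec_mul, haW, vecMulVec_mul_vecMulVec, ha]
  simp

lemma CLTraceLoss_add_vecMulVec (hM : M.IsSymm) {a : Fin p → ℝ} (ha : a ⬝ᵥ a = 1)
    (haW : a ᵥ* W = 0) (u : Fin D → ℝ) :
    CLTraceLoss P M (W + vecMulVec a u) = CLTraceLoss P M W - 2 * (u ⬝ᵥ (P *ᵥ u))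
      + 2 * ((W *ᵥ (M *ᵥ u)) ⬝ᵥ (W *ᵥ (M *ᵥ u))) + (u ⬝ᵥ (M *ᵥ u)) ^ 2 := by
  have hcross : trace (vecMulVec u u * M * (Wᵀ * W) * M)
      = (W *ᵥ (M *ᵥ u)) ⬝ᵥ (W *ᵥ (M *ᵥ u)) := by
    rw [Matrix.mul_assoc, Matrix.mul_assoc, trace_vecMulVec_mul]
    simp only [← mulVec_mulVec]
    rw [dotProduct_mulVec, ← mulVec_transpose, hM.eq, dotProduct_mulVec, vecMul_transpose]
  have hcross' : trace (Wᵀ * W * M * vecMulVec u u * M)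
      = (W *ᵥ (M *ᵥ u)) ⬝ᵥ (W *ᵥ (M *ᵥ u)) := by
    rw [← hcross, Matrix.mul_assoc (Wᵀ * W * M), trace_mul_comm, ← Matrix.mul_assoc]
  have hquartic : trace (vecMulVec u u * M * vecMulVec u u * M) = (u ⬝ᵥ (M *ᵥ u)) ^ 2 := by
    rw [Matrix.mul_assoc, Matrix.mul_assoc, trace_vecMulVec_mul, ← mulVec_mulVec, ← mulVec_mulVec,
      vecMulVec_mulVec]
    simp only [op_smul_eq_smul, mulVec_smul, dotProduct_smul, smul_eq_mul, sq]
  unfold CLTraceLoss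
  rw [transpose_mul_self_add_vecMulVec ha haW]
  simp only [Matrix.add_mul, Matrix.mul_add, trace_add, trace_smul, smul_add, smul_eq_mul,
    hcross, hcross', hquartic, trace_vecMulVec_mul]
  ring

/-- The matrix whose row space has its component `a ᵥ* W` along the unit vector `a` replaced by
`u`: the competitor against which a minimizer `W` is tested. -/
noncomputable def replaceAlong (a : Fin p → ℝ) (W : Matrix (Fin p) (Fin D) ℝ) (u : Fin D → ℝ) :
    Matrix (Fin p) (Fin D) ℝ :=
  W - vecMulVec a (a ᵥ* W) + vecMulVec a u

lemma vecMul_sub_vecMulVec_self {a : Fin p → ℝ} (ha : a ⬝ᵥ a = 1) :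
    a ᵥ* (W - vecMulVec a (a ᵥ* W)) = 0 := by
  rw [vecMul_sub, vecMul_vecMulVec, ha, one_smul, sub_self]

lemma trace_transpose_mul_self_replaceAlong {a : Fin p → ℝ} (ha : a ⬝ᵥ a = 1) (u : Fin D → ℝ) :
    trace ((replaceAlong a W u)ᵀ * replaceAlong a W u)
      = trace (Wᵀ * W) - (a ᵥ* W) ⬝ᵥ (a ᵥ* W) + u ⬝ᵥ u := by
  have h := transpose_mul_self_add_vecMulVec ha (vecMul_sub_vecMulVec_self (W := W) ha)
  have hW := congrArg trace (h (a ᵥ* W))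
  rw [sub_add_cancel, trace_add, trace_vecMulVec] at hW
  rw [replaceAlong, h, trace_add, trace_vecMulVec, hW, add_sub_cancel_right]

lemma CLTraceLoss_replaceAlong_le (hM : M.IsSymm) {a : Fin p → ℝ} (ha : a ⬝ᵥ a = 1)
    {u : Fin D → ℝ} (hWu : W *ᵥ (M *ᵥ u) = 0) :
    CLTraceLoss P M (replaceAlong a W u) ≤ CLTraceLoss P M W
      + ((u ⬝ᵥ (M *ᵥ u)) ^ 2 - 2 * (u ⬝ᵥ (P *ᵥ u)))
      - (((a ᵥ* W) ⬝ᵥ (M *ᵥ (a ᵥ* W))) ^ 2 - 2 * ((a ᵥ* W) ⬝ᵥ (P *ᵥ (a ᵥ* W)))) := by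
  set W₀ := W - vecMulVec a (a ᵥ* W) with hW₀
  have h := CLTraceLoss_add_vecMulVec (P := P) hM ha (vecMul_sub_vecMulVec_self (W := W) ha)
  have hW := h (a ᵥ* W)
  rw [sub_add_cancel] at hW
  have hW₀u : W₀ *ᵥ (M *ᵥ u) = 0 := by
    rw [hW₀, sub_mulVec, vecMulVec_mulVec, ← dotProduct_mulVec, hWu, dotProduct_zero]
    simp
  have hcross := dotProduct_self_nonneg (W₀ *ᵥ (M *ᵥ (a ᵥ* W)))
  rw [replaceAlong, h, hW, ← hW₀, hW₀u, dotProduct_zero]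
  linarith

/-- `W` minimizes `L` globally and has the least Frobenius norm among the global minimizers. -/
def IsMinNormMinimizer (L : Matrix (Fin p) (Fin D) ℝ → ℝ) (W : Matrix (Fin p) (Fin D) ℝ) : Prop :=
  (∀ W', L W ≤ L W') ∧
    ∀ W', (∀ W'', L W' ≤ L W'') → √(∑ i, ∑ j, W i j ^ 2) ≤ √(∑ i, ∑ j, W' i j ^ 2)

lemma IsMinNormMinimizer.trace_transpose_mul_self_le {L : Matrix (Fin p) (Fin D) ℝ → ℝ}
    (hW : IsMinNormMinimizer L W) {W' : Matrix (Fin p) (Fin D) ℝ} (h : L W' ≤ L W) :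
    trace (Wᵀ * W) ≤ trace (W'ᵀ * W') := by
  have hnorm := hW.2 W' fun W'' => h.trans (hW.1 W'')
  rw [Real.sqrt_le_sqrt_iff (by positivity)] at hnorm
  simpa only [trace_transpose_mul_self] using hnorm

/-- Moving `W` by `t • vecMulVec (W *ᵥ u) u` does not change the loss, and lowers the norm to first
order in `t` unless `W *ᵥ u = 0`. -/
lemma IsMinNormMinimizer.mulVec_eq_zero (hM : M.IsSymm) (hP : P.IsSymm)
    (hW : IsMinNormMinimizer (CLTraceLoss P M) W) {u : Fin D → ℝ} (hMu : M *ᵥ u = 0)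
    (hPu : P *ᵥ u = 0) : W *ᵥ u = 0 := by
  set b := W *ᵥ u
  have hconj {Q : Matrix (Fin D) (Fin D) ℝ} (hQ : Q.IsSymm) (hQu : Q *ᵥ u = 0) (t : ℝ) :
      (W + t • vecMulVec b u) * Q * (W + t • vecMulVec b u)ᵀ = W * Q * Wᵀ := by
    have huQ : u ᵥ* Q = 0 := by rw [← mulVec_transpose, hQ.eq, hQu]
    have hWQ : (W + t • vecMulVec b u) * Q = W * Q := by
      rw [Matrix.add_mul, Matrix.smul_mul, vecMulVec_mul, huQ]
      ext
      simp [vecMulVec_apply]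
    rw [hWQ, transpose_add, transpose_smul, transpose_vecMulVec, Matrix.mul_add, Matrix.mul_smul,
      mul_vecMulVec, ← mulVec_mulVec, hQu, mulVec_zero, zero_vecMulVec, smul_zero, add_zero]
  have hnorm (t : ℝ) : 0 ≤ (b ⬝ᵥ b) * (u ⬝ᵥ u) * (t * t) + 2 * (b ⬝ᵥ b) * t + 0 := by
    have h := hW.trace_transpose_mul_self_le (W' := W + t • vecMulVec b u)
      (by simp only [CLTraceLoss_eq_trace, hconj hM hMu, hconj hP hPu, le_refl])
    have hexp : trace ((W + t • vecMulVec b u)ᵀ * (W + t • vecMulVec b u))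
        = trace (Wᵀ * W) + ((b ⬝ᵥ b) * (u ⬝ᵥ u) * (t * t) + 2 * (b ⬝ᵥ b) * t) := by
      have hbW : (b ᵥ* W) ⬝ᵥ u = b ⬝ᵥ b := by rw [← dotProduct_mulVec]
      simp only [transpose_add, transpose_smul, transpose_vecMulVec, Matrix.add_mul,
        Matrix.mul_add, Matrix.smul_mul, Matrix.mul_smul, vecMulVec_mul, mul_vecMulVec,
        add_mulVec, smul_mulVec, vecMulVec_mulVec, op_smul_eq_smul, mulVec_transpose, trace_add,
        trace_smul, trace_vecMulVec, add_dotProduct, smul_dotProduct, dotProduct_comm u, hbW,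
        smul_eq_mul]
      ring
    linarith
  have hdiscrim := discrim_le_zero hnorm
  rw [discrim, mul_zero, sub_zero] at hdiscrim
  have hbb : 2 * (b ⬝ᵥ b) = 0 := pow_eq_zero_iff two_ne_zero |>.mp (hdiscrim.antisymm (sq_nonneg _))
  exact dotProduct_self_eq_zero.mp (by linarith)

end Loss

section PairLoss

variable {ι : Type*} [Fintype ι] {p D : ℕ} {c lam τ : ℝ} {T : Matrix ι ι ℝ}
  {X : Matrix ι (Fin D) ℝ} {W : Matrix (Fin p) (Fin D) ℝ} {f : ι → ℝ}

/-- The contrastive loss of the data set formed by the rows of `X`, with covariance `c • (Xᵀ * X)`;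
`T` records how the positive pairs are weighted. -/
noncomputable def pairLoss (c : ℝ) (T : Matrix ι ι ℝ) (X : Matrix ι (Fin D) ℝ) :
    Matrix (Fin p) (Fin D) ℝ → ℝ :=
  CLTraceLoss (c • (Xᵀ * T * X)) (c • (Xᵀ * X))

/-- A nonzero vector that is an eigenvector both of the Gram matrix `X * Xᵀ`, with eigenvalue `lam`,
and of the pair weights `T`, with eigenvalue `τ`. -/
structure IsJointEigenvector (X : Matrix ι (Fin D) ℝ) (T : Matrix ι ι ℝ) (f : ι → ℝ)
    (lam τ : ℝ) : Prop where
  ne_zero : f ≠ 0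
  gram : (X * Xᵀ) *ᵥ f = lam • f
  pair : T *ᵥ f = τ • f

lemma isSymm_smul_transpose_mul_self : (c • (Xᵀ * X)).IsSymm :=
  IsSymm.smul (by rw [IsSymm, transpose_mul, transpose_transpose]) c

lemma isSymm_smul_transpose_mul_mul (hT : T.IsSymm) : (c • (Xᵀ * T * X)).IsSymm := by
  refine IsSymm.smul ?_ c
  rw [IsSymm, transpose_mul, transpose_mul, transpose_transpose, hT.eq, Matrix.mul_assoc]

lemma smul_transpose_mul_self_mulVec (u : Fin D → ℝ) :
    (c • (Xᵀ * X)) *ᵥ u = c • ((X *ᵥ u) ᵥ* X) := by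
  rw [smul_mulVec, ← mulVec_mulVec, mulVec_transpose]

lemma dotProduct_smul_transpose_mul_mul_mulVec (w : Fin D → ℝ) :
    w ⬝ᵥ ((c • (Xᵀ * T * X)) *ᵥ w) = c * ((X *ᵥ w) ⬝ᵥ (T *ᵥ (X *ᵥ w))) := by
  rw [smul_transpose_mul_mul_mulVec, dotProduct_smul, dotProduct_comm, ← dotProduct_mulVec,
    dotProduct_comm, smul_eq_mul]

lemma dotProduct_smul_transpose_mul_self_mulVec (w : Fin D → ℝ) :
    w ⬝ᵥ ((c • (Xᵀ * X)) *ᵥ w) = c * ((X *ᵥ w) ⬝ᵥ (X *ᵥ w)) := by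
  rw [smul_transpose_mul_self_mulVec, dotProduct_smul, dotProduct_comm, ← dotProduct_mulVec,
    smul_eq_mul]

lemma IsMinNormMinimizer.mulVec_eq_zero_of_mulVec_eq_zero (hT : T.IsSymm)
    (hW : IsMinNormMinimizer (pairLoss c T X) W) {u : Fin D → ℝ} (hu : X *ᵥ u = 0) :
    W *ᵥ u = 0 := by
  refine IsMinNormMinimizer.mulVec_eq_zero isSymm_smul_transpose_mul_self
    (isSymm_smul_transpose_mul_mul hT) hW ?_ ?_
  · rw [smul_transpose_mul_self_mulVec, hu, zero_vecMul, smul_zero]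
  · rw [smul_transpose_mul_mul_mulVec, hu, mulVec_zero, zero_vecMul, smul_zero]

lemma IsMinNormMinimizer.mulVec_vecMul_eq_zero (hT : T.IsSymm)
    (hW : IsMinNormMinimizer (pairLoss c T X) W) (hf : (X * Xᵀ) *ᵥ f = lam • f)
    {u : Fin D → ℝ} (hu : X *ᵥ u = f) (hWu : W *ᵥ u = 0) : W *ᵥ (f ᵥ* X) = 0 := by
  have hker : X *ᵥ (f ᵥ* X - lam • u) = 0 := by
    rw [mulVec_sub, mulVec_smul, hu, ← mulVec_transpose, mulVec_mulVec, hf, sub_self]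
  have h := hW.mulVec_eq_zero_of_mulVec_eq_zero hT hker
  rwa [mulVec_sub, mulVec_smul, hWu, smul_zero, sub_zero] at h

lemma IsJointEigenvector.exists_smul_vecMul (hf : IsJointEigenvector X T f lam τ) (hc : 0 < c)
    (hlam : 0 < lam) (hτ : 0 ≤ τ) :
    ∃ (u : Fin D → ℝ) (t : ℝ), (c • (Xᵀ * X)) *ᵥ u = t • (f ᵥ* X) ∧
      u ⬝ᵥ ((c • (Xᵀ * X)) *ᵥ u) = τ ∧ u ⬝ᵥ ((c • (Xᵀ * T * X)) *ᵥ u) = τ ^ 2 ∧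
      c * lam * (u ⬝ᵥ u) = τ := by
  have hff : 0 < f ⬝ᵥ f := dotProduct_self_pos hf.ne_zero
  set s := √(τ / (c * lam ^ 2 * (f ⬝ᵥ f))) with hs
  have hs2 : c * lam ^ 2 * (f ⬝ᵥ f) * s ^ 2 = τ := by
    rw [hs, Real.sq_sqrt (by positivity), mul_div_cancel₀ _ (by positivity)]
  have hXf : X *ᵥ (f ᵥ* X) = lam • f := by rw [← mulVec_transpose, mulVec_mulVec, hf.gram]
  have hXu : X *ᵥ (s • (f ᵥ* X)) = (s * lam) • f := by rw [mulVec_smul, hXf, smul_smul]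
  refine ⟨s • (f ᵥ* X), c * (s * lam), ?_, ?_, ?_, ?_⟩
  · rw [smul_transpose_mul_self_mulVec, hXu, smul_vecMul, smul_smul]
  · rw [dotProduct_smul_transpose_mul_self_mulVec, hXu]
    simp only [smul_dotProduct, dotProduct_smul, smul_eq_mul]
    linear_combination hs2
  · rw [dotProduct_smul_transpose_mul_mul_mulVec, hXu, mulVec_smul, hf.pair]
    simp only [smul_dotProduct, dotProduct_smul, smul_eq_mul]
    linear_combination τ * hs2
  · rw [smul_dotProduct, dotProduct_smul, vecMul_dotProduct_vecMul, hf.gram]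
    simp only [dotProduct_smul, smul_eq_mul]
    linear_combination hs2

lemma exists_unit_forall_col_dotProduct_eq_zero {α : Type*} (F : Matrix ι α ℝ)
    (X : Matrix ι (Fin D) ℝ) (W : Matrix (Fin p) (Fin D) ℝ) {S : Finset α} (hS : S.card < p) :
    ∃ a : Fin p → ℝ, a ⬝ᵥ a = 1 ∧ ∀ b ∈ S, Fᵀ b ⬝ᵥ (X *ᵥ (a ᵥ* W)) = 0 := by
  obtain ⟨a, ha, h0⟩ := exists_unit_mulVec_eq_zero (by simpa using hS)
    (of fun (b : S) => W *ᵥ (Fᵀ b ᵥ* X))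
  refine ⟨a, ha, fun b hb => ?_⟩
  rw [dotProduct_mulVec, dotProduct_comm, ← dotProduct_mulVec, dotProduct_comm]
  exact congrFun h0 ⟨b, hb⟩

/-- Exchange argument: if `W` misses the joint eigenvector `f`, then no row direction `a ᵥ* W` of
`W` may do worse than the optimally scaled `f ᵥ* X`, nor be longer without doing better. -/
lemma IsMinNormMinimizer.exchange (hW : IsMinNormMinimizer (pairLoss c T X) W)
    (hf : IsJointEigenvector X T f lam τ) (hc : 0 < c) (hlam : 0 < lam) (hτ : 0 ≤ τ)
    (hWf : W *ᵥ (f ᵥ* X) = 0) {a : Fin p → ℝ} (ha : a ⬝ᵥ a = 1) {z : ι → ℝ}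
    (hz : X *ᵥ (a ᵥ* W) = z) :
    τ ^ 2 ≤ 2 * (c * (z ⬝ᵥ (T *ᵥ z))) - (c * (z ⬝ᵥ z)) ^ 2 ∧
      (2 * (c * (z ⬝ᵥ (T *ᵥ z))) - (c * (z ⬝ᵥ z)) ^ 2 ≤ τ ^ 2 →
        c * lam * ((a ᵥ* W) ⬝ᵥ (a ᵥ* W)) ≤ τ) := by
  obtain ⟨u, t, hMu, huM, huP, huu⟩ := hf.exists_smul_vecMul hc hlam hτ
  have hWu : W *ᵥ ((c • (Xᵀ * X)) *ᵥ u) = 0 := by rw [hMu, mulVec_smul, hWf, smul_zero]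
  have hloss := CLTraceLoss_replaceAlong_le (P := c • (Xᵀ * T * X))
    isSymm_smul_transpose_mul_self ha hWu
  rw [huM, huP, dotProduct_smul_transpose_mul_self_mulVec,
    dotProduct_smul_transpose_mul_mul_mulVec, hz] at hloss
  have hmin := hW.1 (replaceAlong a W u)
  rw [pairLoss] at hmin
  refine ⟨by linarith, fun hle => ?_⟩
  have hnorm := hW.trace_transpose_mul_self_le (W' := replaceAlong a W u)
    (hloss.trans (by rw [pairLoss]; linarith))
  rw [trace_transpose_mul_self_replaceAlong ha] at hnorm
  have hwu : (a ᵥ* W) ⬝ᵥ (a ᵥ* W) ≤ u ⬝ᵥ u := by linarith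
  exact (mul_le_mul_of_nonneg_left hwu (mul_pos hc hlam).le).trans_eq huu

lemma IsMinNormMinimizer.mulVec_vecMul_ne_zero_of_lt (hW : IsMinNormMinimizer (pairLoss c T X) W)
    (hf : IsJointEigenvector X T f lam τ) (hc : 0 < c) (hlam : 0 < lam) {σ : ℝ} (hσ : 0 ≤ σ)
    (hστ : σ < τ) {a : Fin p → ℝ} (ha : a ⬝ᵥ a = 1) {z : ι → ℝ} (hz : X *ᵥ (a ᵥ* W) = z)
    (hTz : z ⬝ᵥ (T *ᵥ z) ≤ σ * (z ⬝ᵥ z)) :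
    W *ᵥ (f ᵥ* X) ≠ 0 := by
  intro hWf
  have h := (hW.exchange hf hc hlam (hσ.trans hστ.le) hWf ha hz).1
  have hTz' := mul_le_mul_of_nonneg_left hTz hc.le
  nlinarith [sq_nonneg (c * (z ⬝ᵥ z) - σ)]

lemma IsMinNormMinimizer.mulVec_vecMul_ne_zero_of_le (hW : IsMinNormMinimizer (pairLoss c T X) W)
    (hf : IsJointEigenvector X T f lam τ) (hc : 0 < c) (hτ : 0 < τ)
    {a : Fin p → ℝ} (ha : a ⬝ᵥ a = 1) {z : ι → ℝ} (hz : X *ᵥ (a ᵥ* W) = z)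
    (hTz : z ⬝ᵥ (T *ᵥ z) ≤ τ * (z ⬝ᵥ z)) {L : ℝ} (hL : 0 ≤ L) (hLlam : L < lam)
    (hzz : f ⬝ᵥ z = 0 → z ⬝ᵥ z ≤ L * ((a ᵥ* W) ⬝ᵥ (a ᵥ* W))) :
    W *ᵥ (f ᵥ* X) ≠ 0 := by
  intro hWf
  obtain ⟨hge, hnorm⟩ := hW.exchange hf hc (hL.trans_lt hLlam) hτ.le hWf ha hz
  have hTz' := mul_le_mul_of_nonneg_left hTz hc.le
  have hsq : (c * (z ⬝ᵥ z) - τ) ^ 2 = 0 := by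
    nlinarith [sq_nonneg (c * (z ⬝ᵥ z) - τ)]
  have hzτ : c * (z ⬝ᵥ z) = τ := sub_eq_zero.mp (pow_eq_zero_iff two_ne_zero |>.mp hsq)
  have hfz : f ⬝ᵥ z = 0 := by
    rw [← hz, dotProduct_mulVec, dotProduct_comm, ← dotProduct_mulVec, hWf, dotProduct_zero]
  have hwτ := hnorm (by nlinarith)
  have hzw := mul_le_mul_of_nonneg_left (hzz hfz) hc.le
  have hww : 0 < (a ᵥ* W) ⬝ᵥ (a ᵥ* W) := by
    by_contra! hww
    nlinarith [mul_nonneg (mul_nonneg hc.le hL) (sub_nonneg.mpr hww)]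
  nlinarith [mul_pos hc hww]

end PairLoss

section FactorModel

variable {ι α : Type*} [Fintype ι] [Fintype α] [DecidableEq ι] [DecidableEq α] {p D : ℕ}

/-- The rows of `X` form an orthogonal factor model with loadings `F` and noise variance `v`: the
columns of `F` are orthogonal, with squared norms `d`, and the noise only adds `v` to the diagonal
of the Gram matrix. -/
structure IsOrthogonalFactorModel (X : Matrix ι (Fin D) ℝ) (F : Matrix ι α ℝ) (d : α → ℝ)
    (v : ℝ) : Prop where
  orthogonal : Fᵀ * F = diagonal d
  gram : X * Xᵀ = F * Fᵀ + v • 1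

variable {c v τ : ℝ} {T : Matrix ι ι ℝ} {X : Matrix ι (Fin D) ℝ} {W : Matrix (Fin p) (Fin D) ℝ}
  {F : Matrix ι α ℝ} {d : α → ℝ}

namespace IsOrthogonalFactorModel

lemma transpose_mulVec_col (h : IsOrthogonalFactorModel X F d v) (a : α) :
    Fᵀ *ᵥ Fᵀ a = Pi.single a (d a) := by
  ext b
  refine (congrFun₂ h.orthogonal b a).trans ?_
  rcases eq_or_ne b a with rfl | hba
  · rw [diagonal_apply_eq, Pi.single_eq_same]
  · rw [diagonal_apply_ne d hba, Pi.single_eq_of_ne hba]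

lemma col_ne_zero (h : IsOrthogonalFactorModel X F d v) {a : α} (ha : 0 < d a) : Fᵀ a ≠ 0 := by
  intro h0
  have hsingle := congrFun (h.transpose_mulVec_col a) a
  rw [h0, mulVec_zero, Pi.single_eq_same] at hsingle
  exact ha.ne hsingle

lemma isJointEigenvector_col (h : IsOrthogonalFactorModel X F d v) {a : α} (ha : 0 < d a)
    (hT : T *ᵥ Fᵀ a = τ • Fᵀ a) : IsJointEigenvector X T (Fᵀ a) (d a + v) τ where
  ne_zero := h.col_ne_zero ha
  pair := hT
  gram := by
    rw [h.gram, add_mulVec, ← mulVec_mulVec, h.transpose_mulVec_col, smul_mulVec, one_mulVec,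
      add_smul, mulVec_single]
    ext i
    simp [mul_comm]

lemma vecMul_dotProduct_self_le (h : IsOrthogonalFactorModel X F d v) {z : ι → ℝ} {L : ℝ}
    (hL : 0 ≤ L) (hz : ∀ a, Fᵀ a ⬝ᵥ z = 0 ∨ d a ≤ L) :
    (z ᵥ* F) ⬝ᵥ (z ᵥ* F) ≤ L * (z ⬝ᵥ z) := by
  rw [← mulVec_transpose]
  refine mulVec_dotProduct_self_le Fᵀ z hL ?_
  rw [vecMul_dotProduct_vecMul, transpose_transpose, h.orthogonal]
  simp only [dotProduct, mulVec_diagonal, Finset.mul_sum]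
  refine Finset.sum_le_sum fun a _ => ?_
  obtain ha | ha := hz a
  · rw [show (Fᵀ *ᵥ z) a = 0 from ha]
    simp
  · nlinarith [mul_le_mul_of_nonneg_right ha (mul_self_nonneg ((Fᵀ *ᵥ z) a))]

lemma mulVec_dotProduct_self_le (h : IsOrthogonalFactorModel X F d v) (hv : 0 ≤ v)
    {w : Fin D → ℝ} {L : ℝ} (hL : 0 ≤ L) (hw : ∀ a, Fᵀ a ⬝ᵥ (X *ᵥ w) = 0 ∨ d a ≤ L) :
    (X *ᵥ w) ⬝ᵥ (X *ᵥ w) ≤ (L + v) * (w ⬝ᵥ w) := by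
  refine _root_.mulVec_dotProduct_self_le X w (add_nonneg hL hv) ?_
  have hF := h.vecMul_dotProduct_self_le hL hw
  rw [vecMul_dotProduct_vecMul] at hF
  rw [vecMul_dotProduct_vecMul, h.gram, add_mulVec, dotProduct_add, smul_mulVec, one_mulVec,
    dotProduct_smul, smul_eq_mul]
  linarith

lemma of_orthonormal {V : Matrix α (Fin D) ℝ} {Z : Matrix ι (Fin D) ℝ} (hF : Fᵀ * F = diagonal d)
    (hVV : V * Vᵀ = 1) (hZV : Z * Vᵀ = 0) (hZZ : Z * Zᵀ = 1) (σ : ℝ) :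
    IsOrthogonalFactorModel (F * V + σ • Z) F d (σ ^ 2) where
  orthogonal := hF
  gram := by
    have hVZ : V * Zᵀ = 0 := by rw [← transpose_eq_zero, transpose_mul, transpose_transpose, hZV]
    have hVV' (B : Matrix α ι ℝ) : V * (Vᵀ * B) = B := by
      rw [← Matrix.mul_assoc, hVV, Matrix.one_mul]
    have hZV' (B : Matrix α ι ℝ) : Z * (Vᵀ * B) = 0 := by
      rw [← Matrix.mul_assoc, hZV, Matrix.zero_mul]
    simp only [transpose_add, transpose_mul, transpose_smul, Matrix.add_mul, Matrix.mul_add,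
      Matrix.smul_mul, Matrix.mul_smul, Matrix.mul_assoc, hVV', hZV', hVZ, hZZ, Matrix.mul_zero,
      smul_zero, add_zero, zero_add, smul_smul, sq]

end IsOrthogonalFactorModel

lemma mulVec_row_of_orthonormal {ι : Type*} {V : Matrix α (Fin D) ℝ} {Z : Matrix ι (Fin D) ℝ}
    (hVV : V * Vᵀ = 1) (hZV : Z * Vᵀ = 0) (F : Matrix ι α ℝ) (σ : ℝ) (a : α) :
    (F * V + σ • Z) *ᵥ V a = Fᵀ a := by
  have hXV : (F * V + σ • Z) * Vᵀ = F := by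
    rw [Matrix.add_mul, Matrix.mul_assoc, hVV, Matrix.mul_one, Matrix.smul_mul, hZV, smul_zero,
      add_zero]
  ext i
  exact congrFun₂ hXV i a

theorem IsMinNormMinimizer.mulVec_ne_zero_of_eigenvalue_lt
    (hW : IsMinNormMinimizer (pairLoss c T X) W)
    (hX : IsOrthogonalFactorModel X F d v) (hT : T.IsSymm) (hc : 0 < c) (hv : 0 ≤ v) {a : α}
    (hda : 0 < d a) (hTa : T *ᵥ Fᵀ a = τ • Fᵀ a) {S : Finset α} (hS : S.card < p) {σ : ℝ}
    (hσ : 0 ≤ σ) (hστ : σ < τ)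
    (hdom : ∀ z, (∀ b ∈ S, Fᵀ b ⬝ᵥ z = 0) → z ⬝ᵥ (T *ᵥ z) ≤ σ * (z ⬝ᵥ z))
    {u : Fin D → ℝ} (hu : X *ᵥ u = Fᵀ a) : W *ᵥ u ≠ 0 := by
  have hf := hX.isJointEigenvector_col hda hTa
  obtain ⟨b, hb, hbS⟩ := exists_unit_forall_col_dotProduct_eq_zero F X W hS
  exact fun hWu => hW.mulVec_vecMul_ne_zero_of_lt hf hc (add_pos_of_pos_of_nonneg hda hv) hσ hστ hb
    rfl (hdom _ hbS) (hW.mulVec_vecMul_eq_zero hT hf.gram hu hWu)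

theorem IsMinNormMinimizer.mulVec_ne_zero_of_norm_lt (hW : IsMinNormMinimizer (pairLoss c T X) W)
    (hX : IsOrthogonalFactorModel X F d v) (hT : T.IsSymm) (hc : 0 < c) (hv : 0 ≤ v) {a : α}
    (hda : 0 < d a) (hτ : 0 < τ) (hTa : T *ᵥ Fᵀ a = τ • Fᵀ a) {S : Finset α} (hS : S.card < p)
    (hdom : ∀ z, (∀ b ∈ S, Fᵀ b ⬝ᵥ z = 0) → z ⬝ᵥ (T *ᵥ z) ≤ τ * (z ⬝ᵥ z))
    (hlt : ∀ b ∉ S, b ≠ a → d b < d a)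
    {u : Fin D → ℝ} (hu : X *ᵥ u = Fᵀ a) : W *ᵥ u ≠ 0 := by
  have hf := hX.isJointEigenvector_col hda hTa
  obtain ⟨b, hb, hbS⟩ := exists_unit_forall_col_dotProduct_eq_zero F X W hS
  obtain ⟨L, hL0, hLa, hL⟩ : ∃ L, 0 ≤ L ∧ L < d a ∧ ∀ b ∉ S, b ≠ a → d b ≤ L := by
    let values := insert 0 ((Sᶜ.erase a).image d)
    refine ⟨values.max' (by simp [values]), values.le_max' _ (by simp [values]), ?_, ?_⟩
    · rw [Finset.max'_lt_iff]
      simp only [values, Finset.mem_insert, Finset.mem_image, Finset.mem_erase, Finset.mem_compl]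
      rintro _ (rfl | ⟨b, ⟨hba, hbS⟩, rfl⟩)
      exacts [hda, hlt b hbS hba]
    · exact fun b hbS hba => values.le_max' _ (Finset.mem_insert_of_mem
        (Finset.mem_image_of_mem _ (by simp [hbS, hba])))
  refine fun hWu => hW.mulVec_vecMul_ne_zero_of_le hf hc hτ hb rfl (hdom _ hbS) (add_nonneg hL0 hv)
    (by gcongr) (fun hab => hX.mulVec_dotProduct_self_le hv hL0 fun a' => ?_)
    (hW.mulVec_vecMul_eq_zero hT hf.gram hu hWu)
  by_cases ha'S : a' ∈ S
  · exact .inl (hbS a' ha'S)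
  · rcases eq_or_ne a' a with rfl | ha'a
    · exact .inl hab
    · exact .inr (hL a' ha'S ha'a)

end FactorModel

section Pairing

variable {ι γ : Type*} [Fintype ι] [Fintype γ] [DecidableEq γ] {p D m : ℕ} {y f : ι → ℝ}
  {b : ι → γ} {β : ℝ}

/-- Weights of the pairs of points with the same label `y i = ±1`, normalized to a doubly stochastic
matrix when the two labels are equally frequent. -/
noncomputable def classPairing (y : ι → ℝ) : Matrix ι ι ℝ :=
  (Fintype.card ι : ℝ)⁻¹ • (vecMulVec 1 1 + vecMulVec y y)

/-- The matrix averaging over the fibres of `b`, all of which are meant to have `m` elements. -/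
noncomputable def blockAverage (b : ι → γ) (m : ℕ) : Matrix γ ι ℝ :=
  of fun l i => if b i = l then (m : ℝ)⁻¹ else 0

/-- Weights of the pairs of points in the same fibre of `b`, where all fibres have `m` elements. -/
noncomputable def blockPairing (b : ι → γ) (m : ℕ) : Matrix ι ι ℝ :=
  (m : ℝ) • ((blockAverage b m)ᵀ * blockAverage b m)

/-- Pair weights of the joint loss with mixing weight `β`. -/
noncomputable def jointPairing (β : ℝ) (y : ι → ℝ) (b : ι → γ) (m : ℕ) : Matrix ι ι ℝ :=
  β • classPairing y + (1 - β) • blockPairing b m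

lemma pairLoss_add_smul (c : ℝ) (T U : Matrix ι ι ℝ) (X : Matrix ι (Fin D) ℝ) {s t : ℝ}
    (hst : s + t = 1) (W : Matrix (Fin p) (Fin D) ℝ) :
    pairLoss c (s • T + t • U) X W = s * pairLoss c T X W + t * pairLoss c U X W := by
  simp only [pairLoss]
  rw [← CLTraceLoss_add_smul _ _ _ hst]
  congr 1
  simp only [Matrix.mul_add, Matrix.add_mul, Matrix.mul_smul, Matrix.smul_mul, smul_add,
    smul_comm c]

lemma classPairing_mulVec (y z : ι → ℝ) :
    classPairing y *ᵥ z = (Fintype.card ι : ℝ)⁻¹ • ((1 ⬝ᵥ z) • 1 + (y ⬝ᵥ z) • y) := by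
  rw [classPairing, smul_mulVec, add_mulVec, vecMulVec_mulVec, vecMulVec_mulVec, op_smul_eq_smul,
    op_smul_eq_smul]

lemma isSymm_classPairing (y : ι → ℝ) : (classPairing y).IsSymm := by
  rw [IsSymm, classPairing, transpose_smul, transpose_add, transpose_vecMulVec,
    transpose_vecMulVec]

lemma blockAverage_mulVec {γ : Type*} [DecidableEq γ] (b : ι → γ) (m : ℕ) (z : ι → ℝ)
    (l : γ) :
    (blockAverage b m *ᵥ z) l = (m : ℝ)⁻¹ * ∑ i with b i = l, z i := by
  simp [blockAverage, mulVec, dotProduct, Finset.mul_sum, Finset.sum_filter]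

lemma vecMul_blockAverage {ι : Type*} (b : ι → γ) (m : ℕ) (g : γ → ℝ) :
    g ᵥ* blockAverage b m = (m : ℝ)⁻¹ • (g ∘ b) := by
  ext i
  simp [blockAverage, vecMul, dotProduct, mul_comm]

lemma isSymm_blockPairing {ι : Type*} (b : ι → γ) (m : ℕ) : (blockPairing b m).IsSymm := by
  rw [IsSymm, blockPairing, transpose_smul, transpose_mul, transpose_transpose]

lemma blockPairing_mulVec (b : ι → γ) (m : ℕ) (z : ι → ℝ) :
    blockPairing b m *ᵥ z = (m : ℝ) • ((blockAverage b m *ᵥ z) ᵥ* blockAverage b m) := by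
  rw [blockPairing, smul_mulVec, ← mulVec_mulVec, mulVec_transpose]

section EqualFibres

variable (hm : m ≠ 0) (hb : ∀ l, Finset.card {i | b i = l} = m)
include hm hb

lemma blockPairing_mulVec_of_const (hf : ∀ i j, b i = b j → f i = f j) :
    blockPairing b m *ᵥ f = f := by
  ext i
  have hsum : ∑ j with b j = b i, f j = m * f i := by
    rw [Finset.sum_congr rfl fun j hj => hf j i (Finset.mem_filter.mp hj).2, Finset.sum_const, hb,
      nsmul_eq_mul]
  rw [blockPairing_mulVec, vecMul_blockAverage]
  simp only [Pi.smul_apply, Function.comp_apply, blockAverage_mulVec, hsum, smul_eq_mul]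
  field_simp

lemma dotProduct_blockPairing_mulVec_le (z : ι → ℝ) :
    z ⬝ᵥ (blockPairing b m *ᵥ z) ≤ z ⬝ᵥ z := by
  have hm' : (0 : ℝ) < m := by positivity
  have hAA : blockAverage b m *ᵥ ((blockAverage b m *ᵥ z) ᵥ* blockAverage b m)
      = (m : ℝ)⁻¹ • (blockAverage b m *ᵥ z) := by
    ext l
    rw [vecMul_blockAverage, mulVec_smul, Pi.smul_apply, Pi.smul_apply, blockAverage_mulVec,
      Finset.sum_congr rfl fun i hi => by
        rw [Function.comp_apply, (Finset.mem_filter.mp hi).2],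
      Finset.sum_const, hb, nsmul_eq_mul, inv_mul_cancel_left₀ hm'.ne']
  have hle := mulVec_dotProduct_self_le (blockAverage b m) z (inv_nonneg.mpr hm'.le)
    (by rw [← dotProduct_mulVec, hAA, dotProduct_smul, smul_eq_mul])
  rw [blockPairing_mulVec, dotProduct_smul, dotProduct_comm, ← dotProduct_mulVec, smul_eq_mul]
  calc (m : ℝ) * ((blockAverage b m *ᵥ z) ⬝ᵥ (blockAverage b m *ᵥ z))
      ≤ m * ((m : ℝ)⁻¹ * (z ⬝ᵥ z)) := by gcongr
    _ = z ⬝ᵥ z := mul_inv_cancel_left₀ hm'.ne' _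

lemma jointPairing_mulVec_label [Nonempty ι] (hy1 : 1 ⬝ᵥ y = 0) (hyy : y ⬝ᵥ y = Fintype.card ι)
    (hyb : ∀ i j, b i = b j → y i = y j) : jointPairing β y b m *ᵥ y = y := by
  rw [jointPairing, add_mulVec, smul_mulVec, smul_mulVec, blockPairing_mulVec_of_const hm hb hyb,
    classPairing_mulVec, hy1, hyy, zero_smul, zero_add, smul_smul (Fintype.card ι : ℝ)⁻¹,
    inv_mul_cancel₀ (by simp), one_smul, ← add_smul, add_sub_cancel, one_smul]

lemma jointPairing_mulVec_of_orthogonal (hf1 : 1 ⬝ᵥ f = 0) (hyf : y ⬝ᵥ f = 0)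
    (hfb : ∀ i j, b i = b j → f i = f j) : jointPairing β y b m *ᵥ f = (1 - β) • f := by
  rw [jointPairing, add_mulVec, smul_mulVec, smul_mulVec, blockPairing_mulVec_of_const hm hb hfb,
    classPairing_mulVec, hf1, hyf]
  simp

lemma dotProduct_jointPairing_mulVec_le (hβ : β ≤ 1) {z : ι → ℝ} (hz1 : 1 ⬝ᵥ z = 0)
    (hyz : y ⬝ᵥ z = 0) : z ⬝ᵥ (jointPairing β y b m *ᵥ z) ≤ (1 - β) * (z ⬝ᵥ z) := by
  rw [jointPairing, add_mulVec, smul_mulVec, smul_mulVec, classPairing_mulVec, hz1, hyz, zero_smul,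
    zero_smul, add_zero, smul_zero, smul_zero, zero_add, dotProduct_smul, smul_eq_mul]
  exact mul_le_mul_of_nonneg_left (dotProduct_blockPairing_mulVec_le hm hb z) (sub_nonneg.mpr hβ)

end EqualFibres

lemma isSymm_jointPairing (β : ℝ) (y : ι → ℝ) (b : ι → γ) (m : ℕ) :
    (jointPairing β y b m).IsSymm :=
  ((isSymm_classPairing y).smul β).add ((isSymm_blockPairing b m).smul (1 - β))

end Pairing

section BalancedLabelling

variable {ι : Type*} [Fintype ι] {K q : ℕ} {lab : ι → ℕ × ℝ × ℝ × ℝ}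

/-- The admissible labels `(k, y, s, ρ)`: `k ∈ {3, …, K}` is the index of the background feature,
and `y`, `s`, `ρ` are the signs of the class, subclass and background feature. -/
noncomputable def labels (K : ℕ) : Finset (ℕ × ℝ × ℝ × ℝ) :=
  Finset.Icc 3 K ×ˢ {1, -1} ×ˢ {1, -1} ×ˢ {1, -1}

/-- Every admissible label is taken by exactly `q` points. -/
structure IsBalancedLabelling (K q : ℕ) (lab : ι → ℕ × ℝ × ℝ × ℝ) : Prop where
  mem : ∀ i, lab i ∈ labels K
  card_fibre : ∀ t ∈ labels K, Finset.card {i | lab i = t} = q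

/-- The coordinates, along the features `v₀, v₁, v₂, …`, of a point with label `(k, y, s, ρ)`. -/
noncomputable def loading (φ : ℕ → ℝ) (t : ℕ × ℝ × ℝ × ℝ) : ℕ → ℝ
  | 0 => 1
  | 1 => φ 1 * t.2.1
  | 2 => φ 2 * t.2.2.1
  | c + 3 => if t.1 = c + 3 then φ (c + 3) * t.2.2.2 else 0

/-- The matrix whose rows are the loadings of the points on the features `v₀, …, v_K`. -/
noncomputable def loadingMatrix (φ : ℕ → ℝ) (K : ℕ) (lab : ι → ℕ × ℝ × ℝ × ℝ) :
    Matrix ι (Fin (K + 1)) ℝ :=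
  of fun i a => loading φ (lab i) a

/-- The squared norms of the columns of `loadingMatrix`, up to the multiplicity of the labels. -/
noncomputable def loadingSqNorm (φ : ℕ → ℝ) (K : ℕ) : ℕ → ℝ
  | 0 => 8 * (K - 2 : ℕ)
  | 1 => φ 1 ^ 2 * (8 * (K - 2 : ℕ))
  | 2 => φ 2 ^ 2 * (8 * (K - 2 : ℕ))
  | c + 3 => φ (c + 3) ^ 2 * 8

lemma sum_labels (g : ℕ × ℝ × ℝ × ℝ → ℝ) :
    ∑ t ∈ labels K, g t = ∑ k ∈ Finset.Icc 3 K,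
      (g (k, 1, 1, 1) + g (k, 1, 1, -1) + (g (k, 1, -1, 1) + g (k, 1, -1, -1))
        + (g (k, -1, 1, 1) + g (k, -1, 1, -1) + (g (k, -1, -1, 1) + g (k, -1, -1, -1)))) := by
  have hsign : (1 : ℝ) ≠ -1 := by norm_num
  simp only [labels, Finset.sum_product, Finset.sum_pair hsign]

lemma sum_labels_loading_mul_self (φ : ℕ → ℝ) {a : ℕ} (ha : a ≤ K) :
    ∑ t ∈ labels K, loading φ t a * loading φ t a = loadingSqNorm φ K a := by
  rw [sum_labels]
  rcases a with _ | _ | _ | c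
  case succ.succ.succ =>
    have hc : c + 3 ∈ Finset.Icc 3 K := Finset.mem_Icc.mpr ⟨by omega, ha⟩
    rw [Finset.sum_eq_single_of_mem (c + 3) hc fun k _ hk => by simp [loading, hk]]
    simp only [loading, loadingSqNorm, if_pos]
    ring
  all_goals
    simp only [loading, loadingSqNorm, Finset.sum_const, Nat.card_Icc, Nat.reduceSubDiff,
      nsmul_eq_mul]
    ring

/-- Each loading carries its own sign, so distinct ones are uncorrelated over the sign choices. -/
lemma sum_labels_loading_mul_of_ne (φ : ℕ → ℝ) {a b : ℕ} (hab : a ≠ b) :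
    ∑ t ∈ labels K, loading φ t a * loading φ t b = 0 := by
  rw [sum_labels]
  refine Finset.sum_eq_zero fun k _ => ?_
  rcases a with _ | _ | _ | a <;> rcases b with _ | _ | _ | b <;> grind [loading]

lemma sum_labels_one : ∑ _t ∈ labels K, (1 : ℝ) = 8 * (K - 2 : ℕ) := by
  simpa [loading, loadingSqNorm] using sum_labels_loading_mul_self 0 (Nat.zero_le K)

namespace IsBalancedLabelling

lemma sum_comp (h : IsBalancedLabelling K q lab) (g : ℕ × ℝ × ℝ × ℝ → ℝ) :
    ∑ i, g (lab i) = q * ∑ t ∈ labels K, g t := by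
  rw [← Finset.sum_fiberwise_of_maps_to' (fun i _ => h.mem i), Finset.mul_sum]
  exact Finset.sum_congr rfl fun t ht => by rw [Finset.sum_const, h.card_fibre t ht, nsmul_eq_mul]

lemma card_eq (h : IsBalancedLabelling K q lab) :
    (Fintype.card ι : ℝ) = q * (8 * (K - 2 : ℕ)) := by
  simpa [← sum_labels_one] using h.sum_comp 1

lemma transpose_loadingMatrix_mul_self (h : IsBalancedLabelling K q lab) (φ : ℕ → ℝ) :
    (loadingMatrix φ K lab)ᵀ * loadingMatrix φ K lab
      = diagonal fun a : Fin (K + 1) => q * loadingSqNorm φ K a := by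
  ext a b
  refine (h.sum_comp fun t => loading φ t a * loading φ t b).trans ?_
  rcases eq_or_ne a b with rfl | hab
  · rw [sum_labels_loading_mul_self φ (Nat.lt_succ_iff.mp a.2), diagonal_apply_eq]
  · rw [sum_labels_loading_mul_of_ne φ (Fin.val_injective.ne hab), mul_zero,
      diagonal_apply_ne _ hab]

end IsBalancedLabelling

end BalancedLabelling

section LabelledFactorModel

variable {ι γ : Type*} {K q m p D : ℕ}
  {lab : ι → ℕ × ℝ × ℝ × ℝ} {b : ι → γ} {φ : ℕ → ℝ} {β : ℝ} {z : ι → ℝ} {a : Fin (K + 1)}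

lemma transpose_loadingMatrix_of_val_eq_zero (φ : ℕ → ℝ) (lab : ι → ℕ × ℝ × ℝ × ℝ)
    (ha : (a : ℕ) = 0) : (loadingMatrix φ K lab)ᵀ a = 1 := by
  ext i
  simp [loadingMatrix, ha, loading]

lemma transpose_loadingMatrix_of_val_eq_one (φ : ℕ → ℝ) (lab : ι → ℕ × ℝ × ℝ × ℝ)
    (ha : (a : ℕ) = 1) : (loadingMatrix φ K lab)ᵀ a = φ 1 • fun i => (lab i).2.1 := by
  ext i
  simp [loadingMatrix, ha, loading]

lemma transpose_loadingMatrix_of_val_eq_two (φ : ℕ → ℝ) (lab : ι → ℕ × ℝ × ℝ × ℝ)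
    (ha : (a : ℕ) = 2) : (loadingMatrix φ K lab)ᵀ a = φ 2 • fun i => (lab i).2.2.1 := by
  ext i
  simp [loadingMatrix, ha, loading]

variable [Fintype ι] [Fintype γ] [DecidableEq γ]

namespace IsBalancedLabelling

lemma sum_loading_mul_of_ne (h : IsBalancedLabelling K q lab) (φ : ℕ → ℝ) {j k : ℕ} (hjk : j ≠ k) :
    ∑ i, loading φ (lab i) j * loading φ (lab i) k = 0 := by
  rw [h.sum_comp fun t => loading φ t j * loading φ t k, sum_labels_loading_mul_of_ne φ hjk,
    mul_zero]

lemma one_dotProduct_class (h : IsBalancedLabelling K q lab) :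
    1 ⬝ᵥ (fun i => (lab i).2.1) = 0 := by
  simpa [dotProduct, loading] using h.sum_loading_mul_of_ne 1 (j := 0) (k := 1) (by norm_num)

lemma one_dotProduct_subclass (h : IsBalancedLabelling K q lab) :
    1 ⬝ᵥ (fun i => (lab i).2.2.1) = 0 := by
  simpa [dotProduct, loading] using h.sum_loading_mul_of_ne 1 (j := 0) (k := 2) (by norm_num)

lemma class_dotProduct_subclass (h : IsBalancedLabelling K q lab) :
    (fun i => (lab i).2.1) ⬝ᵥ (fun i => (lab i).2.2.1) = 0 := by
  simpa [dotProduct, loading] using h.sum_loading_mul_of_ne 1 (j := 1) (k := 2) (by norm_num)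

lemma class_dotProduct_self (h : IsBalancedLabelling K q lab) :
    (fun i => (lab i).2.1) ⬝ᵥ (fun i => (lab i).2.1) = Fintype.card ι := by
  have hsq (i : ι) : (lab i).2.1 * (lab i).2.1 = 1 := by
    have hmem := h.mem i
    simp only [labels, Finset.mem_product, Finset.mem_insert, Finset.mem_singleton] at hmem
    exact mul_self_eq_one_iff.mpr hmem.2.1
  simp [dotProduct, hsq]

lemma two_lt [Nonempty ι] (h : IsBalancedLabelling K q lab) : 2 < K := by
  obtain ⟨i⟩ := ‹Nonempty ι›
  have hmem := (Finset.mem_product.mp (h.mem i)).1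
  exact (Finset.mem_Icc.mp hmem).1.trans (Finset.mem_Icc.mp hmem).2

lemma sqNorm_pos_of_mem_one_two [Nonempty ι] (h : IsBalancedLabelling K q lab) {j : ℕ}
    (hj : j = 1 ∨ j = 2) (hφ : φ j ≠ 0) : 0 < q * loadingSqNorm φ K j := by
  have hprod : 0 < φ j ^ 2 * (q * (8 * (K - 2 : ℕ))) := by
    rw [← h.card_eq]
    positivity
  obtain rfl | rfl := hj <;> simpa only [loadingSqNorm, mul_left_comm] using hprod

lemma sqNorm_lt_subclass [Nonempty ι] (h : IsBalancedLabelling K q lab) {c : ℕ} (hc : 3 ≤ c)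
    (hφ : φ c ^ 2 / ((K : ℝ) - 2) < φ 2 ^ 2) :
    q * loadingSqNorm φ K c < q * loadingSqNorm φ K 2 := by
  have hK := h.two_lt
  have hq : (0 : ℝ) < q := by
    have hcard : (0 : ℝ) < Fintype.card ι := by positivity
    exact pos_of_mul_pos_left (h.card_eq ▸ hcard) (by positivity)
  have hK' : (0 : ℝ) < K - 2 := sub_pos.mpr (by exact_mod_cast hK)
  obtain ⟨c, rfl⟩ := Nat.exists_eq_add_of_le' hc
  rw [div_lt_iff₀ hK'] at hφ
  simp only [loadingSqNorm, Nat.cast_sub hK.le, Nat.cast_ofNat]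
  nlinarith

end IsBalancedLabelling

lemma card_filter_lt_and_ne_two (K : ℕ) (hp : 3 ≤ p) :
    Finset.card {a : Fin (K + 1) | (a : ℕ) < p ∧ (a : ℕ) ≠ 2} < p := by
  have hcard := Finset.card_le_card_of_injOn (s := {a : Fin (K + 1) | (a : ℕ) < p ∧ (a : ℕ) ≠ 2})
    (t := (Finset.range p).erase 2) Fin.val (fun a ha => by simpa [and_comm] using ha)
    Fin.val_injective.injOn
  rw [Finset.card_erase_of_mem (Finset.mem_range.mpr hp), Finset.card_range] at hcard
  omega

section EqualFibres

variable (hm : m ≠ 0) (hb : ∀ l, Finset.card {i | b i = l} = m)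
  (hβ : β ≤ 1) (hφ1 : φ 1 ≠ 0)
include hm hb hβ hφ1

lemma dotProduct_jointPairing_mulVec_le_of_forall_loading (hK : 1 ≤ K) {S : Finset (Fin (K + 1))}
    (hS : ∀ a : Fin (K + 1), (a : ℕ) ≤ 1 → a ∈ S)
    (hz : ∀ a ∈ S, (loadingMatrix φ K lab)ᵀ a ⬝ᵥ z = 0) :
    z ⬝ᵥ (jointPairing β (fun i => (lab i).2.1) b m *ᵥ z) ≤ (1 - β) * (z ⬝ᵥ z) := by
  have hz0 := hz 0 (hS 0 (Nat.zero_le _))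
  have hz1 := hz ⟨1, by omega⟩ (hS _ le_rfl)
  rw [transpose_loadingMatrix_of_val_eq_zero φ lab rfl] at hz0
  rw [transpose_loadingMatrix_of_val_eq_one φ lab rfl, smul_dotProduct, smul_eq_mul] at hz1
  exact dotProduct_jointPairing_mulVec_le hm hb hβ hz0 ((mul_eq_zero.mp hz1).resolve_left hφ1)

variable [DecidableEq ι] [Nonempty ι] {V : Matrix (Fin (K + 1)) (Fin D) ℝ} {Z : Matrix ι (Fin D) ℝ}
  {W : Matrix (Fin p) (Fin D) ℝ} {c σ : ℝ}

theorem IsMinNormMinimizer.mulVec_class_ne_zero (h : IsBalancedLabelling K q lab)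
    (hVV : V * Vᵀ = 1) (hZV : Z * Vᵀ = 0) (hZZ : Z * Zᵀ = 1) (hc : 0 < c) (hp : 3 ≤ p)
    (hyb : ∀ i j, b i = b j → (lab i).2.1 = (lab j).2.1) (hβ0 : 0 < β)
    (hW : IsMinNormMinimizer (pairLoss c (jointPairing β (fun i => (lab i).2.1) b m)
      (loadingMatrix φ K lab * V + σ • Z)) W) (ha : (a : ℕ) = 1) : W *ᵥ V a ≠ 0 := by
  have hX := IsOrthogonalFactorModel.of_orthonormal
    (h.transpose_loadingMatrix_mul_self φ) hVV hZV hZZ σ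
  have hd : 0 < q * loadingSqNorm φ K a := by
    simpa only [ha] using h.sqNorm_pos_of_mem_one_two (.inl rfl) hφ1
  have heigen : jointPairing β (fun i => (lab i).2.1) b m *ᵥ (loadingMatrix φ K lab)ᵀ a
      = (1 : ℝ) • (loadingMatrix φ K lab)ᵀ a := by
    rw [transpose_loadingMatrix_of_val_eq_one φ lab ha, mulVec_smul, one_smul,
      jointPairing_mulVec_label hm hb h.one_dotProduct_class h.class_dotProduct_self hyb]
  refine hW.mulVec_ne_zero_of_eigenvalue_lt hX (isSymm_jointPairing _ _ _ _) hc (sq_nonneg σ) hd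
    heigen (card_filter_lt_and_ne_two K hp) (sub_nonneg.mpr hβ) (sub_lt_self 1 hβ0) (fun z hz => ?_)
    (mulVec_row_of_orthonormal hVV hZV _ σ a)
  refine dotProduct_jointPairing_mulVec_le_of_forall_loading hm hb hβ hφ1
    (one_le_two.trans h.two_lt.le) (fun a ha => ?_) hz
  exact Finset.mem_filter.mpr ⟨Finset.mem_univ a, by omega⟩

theorem IsMinNormMinimizer.mulVec_subclass_ne_zero (h : IsBalancedLabelling K q lab)
    (hVV : V * Vᵀ = 1) (hZV : Z * Vᵀ = 0) (hZZ : Z * Zᵀ = 1) (hc : 0 < c) (hp : 3 ≤ p)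
    (hsb : ∀ i j, b i = b j → (lab i).2.2.1 = (lab j).2.2.1) (hβ1 : β ≠ 1) (hφ2 : φ 2 ≠ 0)
    (hlt : ∀ k, p ≤ k → k ≤ K → φ k ^ 2 / ((K : ℝ) - 2) < φ 2 ^ 2)
    (hW : IsMinNormMinimizer (pairLoss c (jointPairing β (fun i => (lab i).2.1) b m)
      (loadingMatrix φ K lab * V + σ • Z)) W) (ha : (a : ℕ) = 2) : W *ᵥ V a ≠ 0 := by
  have hX := IsOrthogonalFactorModel.of_orthonormal
    (h.transpose_loadingMatrix_mul_self φ) hVV hZV hZZ σ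
  have hd : 0 < q * loadingSqNorm φ K a := by
    simpa only [ha] using h.sqNorm_pos_of_mem_one_two (.inr rfl) hφ2
  have heigen : jointPairing β (fun i => (lab i).2.1) b m *ᵥ (loadingMatrix φ K lab)ᵀ a
      = (1 - β) • (loadingMatrix φ K lab)ᵀ a := by
    rw [transpose_loadingMatrix_of_val_eq_two φ lab ha, mulVec_smul, smul_comm,
      jointPairing_mulVec_of_orthogonal hm hb h.one_dotProduct_subclass
        h.class_dotProduct_subclass hsb]
  refine hW.mulVec_ne_zero_of_norm_lt hX (isSymm_jointPairing _ _ _ _) hc (sq_nonneg σ) hd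
    (sub_pos.mpr (hβ.lt_of_ne hβ1)) heigen (card_filter_lt_and_ne_two K hp) (fun z hz => ?_)
    (fun k hk hka => ?_) (mulVec_row_of_orthonormal hVV hZV _ σ a)
  · refine dotProduct_jointPairing_mulVec_le_of_forall_loading hm hb hβ hφ1
      (one_le_two.trans h.two_lt.le) (fun a ha => ?_) hz
    exact Finset.mem_filter.mpr ⟨Finset.mem_univ a, by omega⟩
  · have hk2 : (k : ℕ) ≠ 2 := fun hk2 => hka (Fin.ext (hk2.trans ha.symm))
    have hpk : p ≤ k := by simpa [hk2] using hk
    rw [ha]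
    exact h.sqNorm_lt_subclass (hp.trans hpk) (hlt k hpk (Nat.lt_succ_iff.mp k.2))

end EqualFibres

end LabelledFactorModel

section SecondMoments

variable {ι γ : Type*} [Fintype ι] [Fintype γ] [DecidableEq γ] {m D : ℕ}

lemma vecMulVec_vecMul_self (a : ι → ℝ) (X : Matrix ι (Fin D) ℝ) :
    vecMulVec (a ᵥ* X) (a ᵥ* X) = Xᵀ * vecMulVec a a * X := by
  rw [mul_vecMulVec, vecMulVec_mul, mulVec_transpose]

lemma smul_sum_indicator_label_eq (x : ι → Fin D → ℝ) {y : ι → ℝ}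
    (hy : ∀ i, y i = 1 ∨ y i = -1) (r : ℝ) {ε : ℝ} (hε : ε = 1 ∨ ε = -1) :
    (2 / r) • ∑ i, Set.indicator {j | y j = ε} x i = r⁻¹ • ((1 + ε • y) ᵥ* of x) := by
  have hind (i : ι) : (2 : ℝ) • Set.indicator {j | y j = ε} x i = (1 + ε * y i) • x i := by
    rcases hy i with h | h <;> rcases hε with rfl | rfl <;> norm_num [Set.indicator_apply, h]
  rw [div_eq_inv_mul, mul_smul, Finset.smul_sum, Finset.sum_congr rfl fun i _ => hind i]
  congr 1
  ext t
  simp [vecMul, dotProduct]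

lemma classMeans_secondMoment_eq (x : ι → Fin D → ℝ) {y : ι → ℝ}
    (hy : ∀ i, y i = 1 ∨ y i = -1) {r : ℝ} (hr : r = Fintype.card ι) {xbar : ℝ → Fin D → ℝ}
    (hxbar : ∀ ε, xbar ε = (2 / r) • ∑ i, Set.indicator {j | y j = ε} x i) :
    (2 : ℝ)⁻¹ • (vecMulVec (xbar 1) (xbar 1) + vecMulVec (xbar (-1)) (xbar (-1)))
      = r⁻¹ • ((of x)ᵀ * classPairing y * of x) := by
  have hpair : (2 : ℝ)⁻¹ • (vecMulVec (1 + (1 : ℝ) • y) (1 + (1 : ℝ) • y)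
      + vecMulVec (1 + (-1 : ℝ) • y) (1 + (-1 : ℝ) • y)) = vecMulVec 1 1 + vecMulVec y y := by
    ext i j
    simp only [Matrix.add_apply, Matrix.smul_apply, vecMulVec_apply, Pi.add_apply, Pi.smul_apply,
      Pi.one_apply, smul_eq_mul]
    ring
  rw [hxbar, hxbar, smul_sum_indicator_label_eq x hy r (.inl rfl),
    smul_sum_indicator_label_eq x hy r (.inr rfl), classPairing, ← hpair, ← hr]
  simp only [smul_vecMulVec, vecMulVec_smul, vecMulVec_vecMul_self, Matrix.mul_add, Matrix.add_mul,
    Matrix.mul_smul, Matrix.smul_mul, smul_add, smul_comm (2 : ℝ)⁻¹]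

lemma blockMeans_secondMoment_eq (x : ι → Fin D → ℝ) (b : ι → γ) (hm : m ≠ 0)
    {xtil : γ → Fin D → ℝ}
    (hxtil : ∀ l, xtil l = (m : ℝ)⁻¹ • ∑ i, Set.indicator {j | b j = l} x i) (s : ℝ) :
    s⁻¹ • ∑ l, vecMulVec (xtil l) (xtil l)
      = (m * s)⁻¹ • ((of x)ᵀ * blockPairing b m * of x) := by
  have hrow : xtil = blockAverage b m * of x := by
    ext l t
    rw [hxtil]
    simp [blockAverage, mul_apply, Set.indicator_apply, Finset.mul_sum, ite_apply]
  have hm' : (m : ℝ) ≠ 0 := Nat.cast_ne_zero.mpr hm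
  simp only [hrow, sum_vecMulVec_row, blockPairing, transpose_mul, Matrix.mul_smul, Matrix.smul_mul,
    smul_smul, Matrix.mul_assoc]
  congr 1
  field_simp

end SecondMoments

section Dataset

variable {m n K D : ℕ}

/-- The index of the block of length `m` containing `i`. -/
def blockIndex (i : Fin (m * n)) : Fin n :=
  ⟨i / m, Nat.div_lt_of_lt_mul i.2⟩

lemma card_filter_blockIndex_eq (hm : m ≠ 0) (l : Fin n) :
    Finset.card {i : Fin (m * n) | blockIndex i = l} = m := by
  have hval : Finset.map Fin.valEmbedding {i : Fin (m * n) | blockIndex i = l}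
      = Finset.Ico (l * m) (l * m + m) := by
    ext j
    have hl : (l + 1) * m ≤ m * n := by
      rw [mul_comm m]
      exact Nat.mul_le_mul_right m l.2
    have hdiv := Nat.div_eq_iff (Nat.pos_of_ne_zero hm) (x := j) (y := l)
    simp only [Finset.mem_map, Finset.mem_filter, Finset.mem_univ, true_and, blockIndex,
      Fin.ext_iff, Fin.valEmbedding_apply, Finset.mem_Ico]
    constructor
    · rintro ⟨i, hi, rfl⟩
      rw [add_one_mul] at hl
      omega
    · intro hj
      rw [add_one_mul] at hl
      exact ⟨⟨j, by omega⟩, by simp only; omega, rfl⟩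
  rw [← Finset.card_map Fin.valEmbedding, hval, Nat.card_Ico, Nat.add_sub_cancel_left]

lemma sum_loading_mul (φ : ℕ → ℝ) {t : ℕ × ℝ × ℝ × ℝ} (ht : t ∈ labels K) (w : ℕ → ℝ) :
    ∑ a : Fin (K + 1), loading φ t a * w a
      = w 0 + φ 1 * t.2.1 * w 1 + φ 2 * t.2.2.1 * w 2 + φ t.1 * t.2.2.2 * w t.1 := by
  obtain ⟨h3, hK⟩ := Finset.mem_Icc.mp (Finset.mem_product.mp ht).1
  obtain ⟨k, hk⟩ := Nat.exists_eq_add_of_le' h3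
  obtain ⟨K, rfl⟩ := Nat.exists_eq_add_of_le' (h3.trans hK)
  rw [Fin.sum_univ_eq_sum_range fun a => loading φ t a * w a]
  simp only [Finset.sum_range_succ' _ (K + 3), Finset.sum_range_succ' _ (K + 2),
    Finset.sum_range_succ' _ (K + 1), loading, hk]
  rw [Finset.sum_eq_single_of_mem k (Finset.mem_range.mpr (by omega)) fun c _ hc => by
    rw [if_neg (by omega), zero_mul]]
  rw [if_pos rfl]
  ring

/-- The matrix of the features `v₀, …, v_K`. -/
def featureMatrix (v : ℕ → Fin D → ℝ) (K : ℕ) : Matrix (Fin (K + 1)) (Fin D) ℝ :=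
  of fun a => v a

/-- The matrix of the noise directions `v_{K+1}, …, v_{K+N}`, one for each data point. -/
def noiseMatrix (v : ℕ → Fin D → ℝ) (K N : ℕ) : Matrix (Fin N) (Fin D) ℝ :=
  of fun i => v (K + 1 + i)

section Orthonormal

variable {N : ℕ} {v : ℕ → Fin D → ℝ} (hv : ∀ i j, i ≤ K + N → j ≤ K + N →
  (∑ t, v i t * v j t) = if i = j then (1 : ℝ) else 0)
include hv

lemma featureMatrix_mul_transpose_self :
    featureMatrix v K * (featureMatrix v K)ᵀ = 1 := by
  ext a b
  refine (hv a b (by omega) (by omega)).trans ?_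
  simp only [one_apply, Fin.ext_iff]

lemma noiseMatrix_mul_transpose_self : noiseMatrix v K N * (noiseMatrix v K N)ᵀ = 1 := by
  ext i j
  refine (hv (K + 1 + i) (K + 1 + j) (by omega) (by omega)).trans ?_
  simp only [one_apply, Fin.ext_iff, Nat.add_right_inj]

lemma noiseMatrix_mul_transpose_featureMatrix :
    noiseMatrix v K N * (featureMatrix v K)ᵀ = 0 := by
  ext i a
  exact (hv (K + 1 + i) a (by omega) (by omega)).trans (if_neg (by omega))

end Orthonormal

lemma isBalancedLabelling_of_ncard {ι : Type*} [Fintype ι] {q : ℕ} {y s ρ : ι → ℝ} {κ : ι → ℕ}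
    (hy : ∀ i, y i = 1 ∨ y i = -1) (hs : ∀ i, s i = 1 ∨ s i = -1) (hρ : ∀ i, ρ i = 1 ∨ ρ i = -1)
    (hκ : ∀ i, 3 ≤ κ i ∧ κ i ≤ K)
    (hbal : ∀ (a b r : ℝ) (c : ℕ), (a = 1 ∨ a = -1) → (b = 1 ∨ b = -1) → (r = 1 ∨ r = -1) →
      3 ≤ c → c ≤ K → Set.ncard {i | y i = a ∧ s i = b ∧ κ i = c ∧ ρ i = r} = q) :
    IsBalancedLabelling K q fun i => (κ i, y i, s i, ρ i) where
  mem i := by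
    simp only [labels, Finset.mem_product, Finset.mem_Icc, Finset.mem_insert, Finset.mem_singleton]
    exact ⟨hκ i, hy i, hs i, hρ i⟩
  card_fibre := by
    rintro ⟨c, a, b, r⟩ ht
    simp only [labels, Finset.mem_product, Finset.mem_Icc, Finset.mem_insert,
      Finset.mem_singleton] at ht
    obtain ⟨⟨hc, hcK⟩, ha, hb, hr⟩ := ht
    rw [← hbal a b r c ha hb hr hc hcK, ← Set.ncard_coe_finset]
    congr 1
    ext i
    simp only [Finset.coe_filter, Finset.mem_univ, true_and, Set.mem_ofPred_eq, Prod.mk.injEq]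
    tauto

lemma of_eq_loadingMatrix_mul_add {N : ℕ} {φ : ℕ → ℝ} {σ : ℝ} {v : ℕ → Fin D → ℝ}
    {y s ρ : Fin N → ℝ} {κ : Fin N → ℕ} (hlab : ∀ i, (κ i, y i, s i, ρ i) ∈ labels K)
    {x : Fin N → Fin D → ℝ}
    (hx : ∀ i, x i = fun t => v 0 t + y i * φ 1 * v 1 t + s i * φ 2 * v 2 t
      + ρ i * φ (κ i) * v (κ i) t + σ * v (K + 1 + i) t) :
    of x = loadingMatrix φ K (fun i => (κ i, y i, s i, ρ i)) * featureMatrix v K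
      + σ • noiseMatrix v K N := by
  ext i t
  have hsum := sum_loading_mul φ (hlab i) fun a => v a t
  simp only [Matrix.add_apply, mul_apply, Matrix.smul_apply, of_apply, loadingMatrix,
    featureMatrix, noiseMatrix, hsum, hx, smul_eq_mul]
  ring

lemma jointLoss_eq_pairLoss {p : ℕ} (hm : m ≠ 0) {y : Fin (m * n) → ℝ}
    (hy : ∀ i, y i = 1 ∨ y i = -1) {x : Fin (m * n) → Fin D → ℝ}
    {M Mp Mt : Matrix (Fin D) (Fin D) ℝ}
    (hM : M = (m * n : ℝ)⁻¹ • ∑ i, vecMulVec (x i) (x i)) {xbar : ℝ → Fin D → ℝ}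
    (hxbar : ∀ ε, xbar ε = (2 / (m * n : ℝ)) • ∑ i, Set.indicator {j | y j = ε} x i)
    (hMp : Mp = (2 : ℝ)⁻¹ • (vecMulVec (xbar 1) (xbar 1) + vecMulVec (xbar (-1)) (xbar (-1))))
    {xtil : Fin n → Fin D → ℝ}
    (hxtil : ∀ l : Fin n, xtil l = (m : ℝ)⁻¹ •
      ∑ i, Set.indicator {j : Fin (m * n) | j.1 / m = l.1} x i)
    (hMt : Mt = (n : ℝ)⁻¹ • ∑ l, vecMulVec (xtil l) (xtil l)) (β : ℝ) :
    (fun W : Matrix (Fin p) (Fin D) ℝ => β * CLTraceLoss Mp M W + (1 - β) * CLTraceLoss Mt M W)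
      = pairLoss (m * n : ℝ)⁻¹ (jointPairing β y blockIndex m) (of x) := by
  have hM' : M = (m * n : ℝ)⁻¹ • ((of x)ᵀ * of x) := hM.trans (by rw [← sum_vecMulVec_row]; rfl)
  have hMp' := hMp.trans (classMeans_secondMoment_eq x hy (by simp) hxbar)
  have hMt' := hMt.trans (blockMeans_secondMoment_eq x blockIndex hm
    (fun l => (hxtil l).trans (by simp only [blockIndex, Fin.ext_iff])) n)
  funext W
  rw [jointPairing, pairLoss_add_smul _ _ _ _ (add_sub_cancel β 1), hMp', hMt', hM']
  rfl

end Dataset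

lemma sq_div_lt_of_forall_succ_le {i k K : ℕ} {φ : ℕ → ℝ} {r B : ℝ} (hr : 0 ≤ r)
    (hmono : ∀ j, i ≤ j → j < K → φ (j + 1) ≤ φ j) (hB : φ i ^ 2 / r < B) (hik : i ≤ k)
    (hkK : k ≤ K) (hk : 0 ≤ φ k) : φ k ^ 2 / r < B := by
  have hanti : AntitoneOn φ (Set.Icc i K) :=
    antitoneOn_of_succ_le Set.ordConnected_Icc fun j _ hj hj' => hmono j hj.1 hj'.2
  have hle : φ k ≤ φ i := hanti ⟨le_rfl, hik.trans hkK⟩ ⟨hik, hkK⟩ hik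
  exact lt_of_le_of_lt (by gcongr) hB

theorem stmt_4_general
    (m K n D q : ℕ) (hm : 1 ≤ m) (hn : 1 ≤ n) (φ : ℕ → ℝ) (σξ : ℝ)
    (v : ℕ → Fin D → ℝ)
    (hortho : ∀ i j, i ≤ K + m * n → j ≤ K + m * n →
      (∑ t, v i t * v j t) = if i = j then (1 : ℝ) else 0)
    (y ysub ρ : Fin (m * n) → ℝ) (κ : Fin (m * n) → ℕ)
    (hy : ∀ i, y i = 1 ∨ y i = -1)
    (hysub : ∀ i, ysub i = 1 ∨ ysub i = -1)
    (hρ : ∀ i, ρ i = 1 ∨ ρ i = -1)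
    (hκ : ∀ i, 3 ≤ κ i ∧ κ i ≤ K)
    (hblock : ∀ i j : Fin (m * n), i.1 / m = j.1 / m → y i = y j ∧ ysub i = ysub j)
    (hbal : ∀ (a b r : ℝ) (c : ℕ), (a = 1 ∨ a = -1) → (b = 1 ∨ b = -1) →
      (r = 1 ∨ r = -1) → 3 ≤ c → c ≤ K →
      Set.ncard {i : Fin (m * n) | y i = a ∧ ysub i = b ∧ κ i = c ∧ ρ i = r} = q)
    (x : Fin (m * n) → Fin D → ℝ)
    (hx : ∀ i, x i = fun t => v 0 t + y i * φ 1 * v 1 t + ysub i * φ 2 * v 2 t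
      + ρ i * φ (κ i) * v (κ i) t + σξ * v (K + 1 + i.1) t)
    (M Mp : Matrix (Fin D) (Fin D) ℝ)
    (hM : M = ((m * n : ℝ))⁻¹ • ∑ i, vecMulVec (x i) (x i))
    (xbar : ℝ → Fin D → ℝ)
    (hxbar : ∀ ε, xbar ε = (2 / (m * n : ℝ)) •
      ∑ i, Set.indicator {j : Fin (m * n) | y j = ε} x i)
    (hMp : Mp = (2 : ℝ)⁻¹ • (vecMulVec (xbar 1) (xbar 1) + vecMulVec (xbar (-1)) (xbar (-1))))
    (xtil : Fin n → Fin D → ℝ)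
    (hxtil : ∀ l : Fin n, xtil l = (m : ℝ)⁻¹ •
      ∑ i, Set.indicator {j : Fin (m * n) | j.1 / m = l.1} x i)
    (Mt : Matrix (Fin D) (Fin D) ℝ)
    (hMt : Mt = (n : ℝ)⁻¹ • ∑ l, vecMulVec (xtil l) (xtil l))
    (p : ℕ) (hp : 3 ≤ p) (hφ1 : φ 1 ≠ 0) (hφ2 : φ 2 ≠ 0)
    (hlt : ∀ k, p ≤ k → k ≤ K → φ k ^ 2 / ((K : ℝ) - 2) < φ 2 ^ 2)
    (β : ℝ) (hβ0 : 0 < β) (hβ1 : β < 1) (W : Matrix (Fin p) (Fin D) ℝ)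
    (hW : IsMinNormMinimizer
      (fun W => β * CLTraceLoss Mp M W + (1 - β) * CLTraceLoss Mt M W) W) :
    W *ᵥ v 1 ≠ 0 ∧ W *ᵥ v 2 ≠ 0 := by
  have hm0 : m ≠ 0 := Nat.one_le_iff_ne_zero.mp hm
  have : NeZero (m * n) := ⟨(Nat.mul_pos hm hn).ne'⟩
  have hlab := isBalancedLabelling_of_ncard hy hysub hρ hκ hbal
  have hx : of x = loadingMatrix φ K (fun i => (κ i, y i, ysub i, ρ i)) * featureMatrix v K
      + σξ • noiseMatrix v K (m * n) := of_eq_loadingMatrix_mul_add hlab.mem hx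
  rw [jointLoss_eq_pairLoss hm0 hy hM hxbar hMp hxtil hMt, hx] at hW
  have hVV := featureMatrix_mul_transpose_self hortho
  have hZV := noiseMatrix_mul_transpose_featureMatrix hortho
  have hZZ := noiseMatrix_mul_transpose_self hortho
  have hK := hlab.two_lt
  have hc : (0 : ℝ) < (m * n : ℝ)⁻¹ := by positivity
  have hb := card_filter_blockIndex_eq (n := n) hm0
  constructor
  · exact hW.mulVec_class_ne_zero hm0 hb hβ1.le hφ1 hlab hVV hZV hZZ hc hp
      (fun i j hij => (hblock i j (Fin.val_eq_of_eq hij)).1) hβ0 (a := ⟨1, by omega⟩) rfl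
  · exact hW.mulVec_subclass_ne_zero hm0 hb hβ1.le hφ1 hlab hVV hZV hZZ hc hp
      (fun i j hij => (hblock i j (Fin.val_eq_of_eq hij)).2) hβ1.ne hφ2 hlt
      (a := ⟨2, by omega⟩) rfl

theorem stmt_4
    (m K n D : ℕ)
    (hm : 1 ≤ m) (hK : 3 ≤ K) (hn : 1 ≤ n) (hdiv : 8 * (K - 2) ∣ n)
    (hD : K + 1 + m * n ≤ D)
    (φ : ℕ → ℝ) (hφ : ∀ j, 1 ≤ j → j ≤ K → 0 < φ j)
    (μ σξ : ℝ) (hσ : 0 < σξ)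
    (v : ℕ → Fin D → ℝ)
    (hortho : ∀ i j, i ≤ K + m * n → j ≤ K + m * n →
      (∑ t, v i t * v j t) = if i = j then (1 : ℝ) else 0)
    (y ysub ρ : Fin (m * n) → ℝ) (κ : Fin (m * n) → ℕ)
    (hy : ∀ i, y i = 1 ∨ y i = -1)
    (hysub : ∀ i, ysub i = 1 ∨ ysub i = -1)
    (hρ : ∀ i, ρ i = 1 ∨ ρ i = -1)
    (hκ : ∀ i, 3 ≤ κ i ∧ κ i ≤ K)
    (hblock : ∀ i j : Fin (m * n), i.1 / m = j.1 / m →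
      y i = y j ∧ ysub i = ysub j ∧ κ i = κ j ∧ ρ i = ρ j)
    (hbal : ∀ (a b r : ℝ) (c : ℕ), (a = 1 ∨ a = -1) → (b = 1 ∨ b = -1) →
      (r = 1 ∨ r = -1) → 3 ≤ c → c ≤ K →
      Set.ncard {i : Fin (m * n) | y i = a ∧ ysub i = b ∧ κ i = c ∧ ρ i = r}
        = m * n / (8 * (K - 2)))
    (x : Fin (m * n) → Fin D → ℝ)
    (hx : ∀ i, x i = fun t => v 0 t + y i * φ 1 * v 1 t + (ysub i * φ 2 + μ) * v 2 t
      + ρ i * φ (κ i) * v (κ i) t + σξ * v (K + 1 + i.1) t)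
    (M Mp : Matrix (Fin D) (Fin D) ℝ)
    (hM : M = ((m * n : ℝ))⁻¹ • ∑ i, Matrix.vecMulVec (x i) (x i))
    (xbar : ℝ → Fin D → ℝ)
    (hxbar : ∀ ε, xbar ε = (2 / (m * n : ℝ)) •
      ∑ i, Set.indicator {j : Fin (m * n) | y j = ε} x i)
    (hMp : Mp = (2 : ℝ)⁻¹ • (Matrix.vecMulVec (xbar 1) (xbar 1)
      + Matrix.vecMulVec (xbar (-1)) (xbar (-1))))
    (xtil : Fin n → Fin D → ℝ)
    (hxtil : ∀ l : Fin n, xtil l = (m : ℝ)⁻¹ •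
      ∑ i, Set.indicator {j : Fin (m * n) | j.1 / m = l.1} x i)
    (Mt : Matrix (Fin D) (Fin D) ℝ)
    (hMt : Mt = (n : ℝ)⁻¹ • ∑ l, Matrix.vecMulVec (xtil l) (xtil l))
    (hμ : μ = 0) (p : ℕ) (hp5 : 5 ≤ p) (hpK : p ≤ K)
    (hmono : ∀ j, 3 ≤ j → j < K → φ (j + 1) ≤ φ j)
    (hφ2 : φ (p - 2) ^ 2 / ((K : ℝ) - 2) < φ 2 ^ 2)
    (hφ1 : φ 1 ^ 2 < φ (p - 1) ^ 2 / ((K : ℝ) - 2)) :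
    ∀ β : ℝ, 0 < β → β < 1 →
    ∀ Wstar : Matrix (Fin p) (Fin D) ℝ,
      (∀ W : Matrix (Fin p) (Fin D) ℝ,
        β * CLTraceLoss Mp M Wstar + (1 - β) * CLTraceLoss Mt M Wstar ≤
        β * CLTraceLoss Mp M W + (1 - β) * CLTraceLoss Mt M W) →
      (∀ W : Matrix (Fin p) (Fin D) ℝ,
        (∀ W' : Matrix (Fin p) (Fin D) ℝ,
          β * CLTraceLoss Mp M W + (1 - β) * CLTraceLoss Mt M W ≤
          β * CLTraceLoss Mp M W' + (1 - β) * CLTraceLoss Mt M W') →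
        Real.sqrt (∑ i, ∑ j, (Wstar i j) ^ 2) ≤ Real.sqrt (∑ i, ∑ j, (W i j) ^ 2)) →
      Wstar.mulVec (v 1) ≠ 0 ∧ Wstar.mulVec (v 2) ≠ 0 := by
  have hK2 : (0 : ℝ) ≤ K - 2 := sub_nonneg.mpr (by exact_mod_cast le_of_lt hK)
  exact fun β hβ0 hβ1 W hmin hnorm =>
    stmt_4_general m K n D _ hm hn φ σξ v hortho y ysub ρ κ hy hysub hρ hκ
      (fun i j hij => ⟨(hblock i j hij).1, (hblock i j hij).2.1⟩) hbal x
      (by simpa only [hμ, add_zero] using hx) M Mp hM xbar hxbar hMp xtil hxtil Mt hMt p (by omega)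
      (hφ 1 le_rfl (by omega)).ne' (hφ 2 one_le_two (by omega)).ne'
      (fun k hpk hk => sq_div_lt_of_forall_succ_le hK2 (fun j hj => hmono j (by omega)) hφ2
        (by omega) hk (hφ k (by omega) hk).le) β hβ0 hβ1 W ⟨hmin, hnorm⟩
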